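/- arXiv:1209.3510 — 2 statements merged into one kernel-verified Lean document; each statement's English description precedes it below -/
import Mathlib

section
/- Let U ⊆ ℝ³ be an open neighbourhood of 0, let w : U → ℝ³ be differentiable with w(0) = 0, and define the frame e_j^α(x) as the entries of the matrix E(x) := [[1, w³(x), −w²(x)], [−w³(x), 1, w¹(x)], [w²(x), −w¹(x), 1]] (the j-th row of E(x) being e_j(x)), assumed pointwise invertible on U. Define g^{αβ} := Σ_j e_j^α e_j^β, its inverse g_{αβ}, σ^α := Σ_j e_j^α s^j, σ_β := Σ_α g_{βα} σ^α, the Christoffel symbols Γ(β;αγ) := (1/2) Σ_δ g^{βδ}(∂g_{γδ}/∂x^α + ∂g_{αδ}/∂x^γ − ∂g_{αγ}/∂x^δ), A₀ := −(i/4) Σ_{α,β} σ^α σ_β (∂σ^β/∂x^α + Σ_γ Γ(β;αγ)σ^γ) + (i/2) Σ_{α,β} σ^α Γ(β;αβ), and A_sub := A₀ + (i/2) Σ_α ∂σ^α/∂x^α. Then A_sub(0) = −(1/2) (div w)(0) · I, where div w = Σ_α ∂w^α/∂x^α and I is the 2×2 identity matrix. -/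
open Complex Matrix BigOperators

noncomputable section

/-- The Pauli matrices s¹, s², s³. -/
def pauli : Fin 3 → Matrix (Fin 2) (Fin 2) ℂ :=
  ![!![0, 1; 1, 0], !![0, -Complex.I; Complex.I, 0], !![1, 0; 0, -1]]

/-- Partial derivative at the origin of a real-valued function on ℝ³. -/
def pdR (f : (Fin 3 → ℝ) → ℝ) (α : Fin 3) : ℝ := fderiv ℝ f 0 (Pi.single α 1)

/-- Partial derivative at the origin of a complex-valued function on ℝ³. -/
def pdC (f : (Fin 3 → ℝ) → ℂ) (α : Fin 3) : ℂ := fderiv ℝ f 0 (Pi.single α 1)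

/-- The frame matrix E(x) (linearization of an orthogonal matrix about the identity),
whose j-th row is the frame vector e_j(x); w is the vector of microrotations. -/
def Emat (w : (Fin 3 → ℝ) → Fin 3 → ℝ) (x : Fin 3 → ℝ) : Matrix (Fin 3) (Fin 3) ℝ :=
  !![1, w x 2, -(w x 1); -(w x 2), 1, w x 0; w x 1, -(w x 0), 1]

/-- The contravariant metric g^{αβ} = Σ_j e_j^α e_j^β. -/
def gM (w : (Fin 3 → ℝ) → Fin 3 → ℝ) (x : Fin 3 → ℝ) : Matrix (Fin 3) (Fin 3) ℝ :=
  Matrix.of fun α β => ∑ j, Emat w x j α * Emat w x j β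

/-- The covariant metric g_{αβ}, inverse matrix of g^{αβ}. -/
def glM (w : (Fin 3 → ℝ) → Fin 3 → ℝ) (x : Fin 3 → ℝ) : Matrix (Fin 3) (Fin 3) ℝ :=
  (gM w x)⁻¹

/-- The Pauli matrices σ^α = Σ_j e_j^α s^j of the frame. -/
def sigma' (w : (Fin 3 → ℝ) → Fin 3 → ℝ) (x : Fin 3 → ℝ) (α : Fin 3) :
    Matrix (Fin 2) (Fin 2) ℂ :=
  ∑ j, ((Emat w x j α : ℝ) : ℂ) • pauli j

/-- σ_β = Σ_α g_{βα} σ^α. -/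
def sigmaLow (w : (Fin 3 → ℝ) → Fin 3 → ℝ) (x : Fin 3 → ℝ) (β : Fin 3) :
    Matrix (Fin 2) (Fin 2) ℂ :=
  ∑ α, ((glM w x β α : ℝ) : ℂ) • sigma' w x α

/-- The Christoffel symbols Γ(β;αγ) at the origin. -/
def christoffel (w : (Fin 3 → ℝ) → Fin 3 → ℝ) (β α γ : Fin 3) : ℝ :=
  (1 / 2) * ∑ δ, gM w 0 β δ *
    (pdR (fun y => glM w y γ δ) α + pdR (fun y => glM w y α δ) γ - pdR (fun y => glM w y α γ) δ)

/-- ∂σ^β/∂x^α at the origin (entrywise). -/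
def Dsigma (w : (Fin 3 → ℝ) → Fin 3 → ℝ) (α β : Fin 3) : Matrix (Fin 2) (Fin 2) ℂ :=
  Matrix.of fun i j => pdC (fun y => sigma' w y β i j) α

/-- The zero-order part A₀ of the massless Dirac operator on half-densities, at the origin. -/
def A0 (w : (Fin 3 → ℝ) → Fin 3 → ℝ) : Matrix (Fin 2) (Fin 2) ℂ :=
  (-(Complex.I / 4)) • (∑ α, ∑ β, sigma' w 0 α * sigmaLow w 0 β *
      (Dsigma w α β + ∑ γ, ((christoffel w β α γ : ℝ) : ℂ) • sigma' w 0 γ))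
    + (Complex.I / 2) • (∑ α, ∑ β, ((christoffel w β α β : ℝ) : ℂ) • sigma' w 0 α)

/-- The subprincipal symbol A_sub = A₀ + (i/2) Σ_α ∂σ^α/∂x^α, at the origin. -/
def Asub (w : (Fin 3 → ℝ) → Fin 3 → ℝ) : Matrix (Fin 2) (Fin 2) ℂ :=
  A0 w + (Complex.I / 2) • ∑ α, Dsigma w α α

/-!
Write `a·s` for the Pauli matrix attached to a vector `a`. The frame satisfies
`σ^β = (e_β + e_β × w)·s`, so at a zero of `w` its first derivative is `∂_α σ^β = (e_β × ∂_α w)·s`.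
The metric `g^{αβ}` is `(1 + |w|²) I - w wᵀ`, with inverse `(1 + |w|²)⁻¹ (I + w wᵀ)`; the latter is
stationary where `w = 0`, so the Christoffel symbols vanish there.
By `(a·s)(b·s) = ⟨a, b⟩ I + i (a × b)·s`, the remaining term of `A₀` is
`-½ ∑ s^α (∂_α w)·s = -½ (div w) I - (i/2) (curl w)·s`, and `(i/2) ∑ ∂_α σ^α = (i/2) (curl w)·s`
cancels the curl.
-/

section PauliVector

/-- The Pauli vector `a·s = ∑ j, a j s^j` of `a ∈ ℝ³`, as a real-linear map; coefficients are real
because those of a frame are. -/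
def pauliVec : (Fin 3 → ℝ) →ₗ[ℝ] Matrix (Fin 2) (Fin 2) ℂ :=
  Fintype.linearCombination ℝ pauli

lemma pauliVec_single (α : Fin 3) : pauliVec (Pi.single α 1) = pauli α := by
  simp [pauliVec, Fintype.linearCombination_apply_single]

lemma pauliVec_mul_pauliVec (a b : Fin 3 → ℝ) :
    pauliVec a * pauliVec b = (a ⬝ᵥ b) • 1 + I • pauliVec (a ⨯₃ b) := by
  ext k l
  fin_cases k <;> fin_cases l <;>
    simp [pauliVec, Fintype.linearCombination_apply, pauli, Fin.sum_univ_three, cross_apply,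
      vec3_dotProduct] <;>
    grind [I_sq]

lemma pauli_mul_pauliVec (α : Fin 3) (v : Fin 3 → ℝ) :
    pauli α * pauliVec v = v α • 1 + I • pauliVec (Pi.single α 1 ⨯₃ v) := by
  rw [← pauliVec_single, pauliVec_mul_pauliVec, single_one_dotProduct]

lemma sum_single_cross_single_cross {R : Type*} [CommRing R] (v : Fin 3 → R) :
    ∑ β, Pi.single β 1 ⨯₃ (Pi.single β 1 ⨯₃ v) = (-2 : R) • v := by
  ext i
  fin_cases i <;> simp [Fin.sum_univ_three, cross_apply] <;> ring

lemma sum_pauli_mul_pauliVec_single_cross (v : Fin 3 → ℝ) :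
    ∑ β, pauli β * pauliVec (Pi.single β 1 ⨯₃ v) = (-2 * I) • pauliVec v := by
  have entry_eq_zero (β : Fin 3) : (Pi.single β 1 ⨯₃ v) β = 0 :=
    (single_one_dotProduct β _).symm.trans (dot_self_cross _ _)
  calc ∑ β, pauli β * pauliVec (Pi.single β 1 ⨯₃ v)
      = I • pauliVec (∑ β, Pi.single β 1 ⨯₃ (Pi.single β 1 ⨯₃ v)) := by
        simp only [pauli_mul_pauliVec, entry_eq_zero, zero_smul, zero_add, map_sum,
          Finset.smul_sum]
    _ = (-2 * I) • pauliVec v := by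
        rw [sum_single_cross_single_cross, map_smul]
        module

lemma sum_pauli_mul_pauliVec (V : Fin 3 → Fin 3 → ℝ) :
    ∑ α, pauli α * pauliVec (V α) =
      (∑ α, V α α) • 1 + I • ∑ α, pauliVec (Pi.single α 1 ⨯₃ V α) := by
  simp only [pauli_mul_pauliVec, Finset.sum_add_distrib, Finset.sum_smul, Finset.smul_sum]

end PauliVector

section Frame

variable {w : (Fin 3 → ℝ) → Fin 3 → ℝ} {x : Fin 3 → ℝ}

lemma sigma'_eq_pauliVec (w : (Fin 3 → ℝ) → Fin 3 → ℝ) (x : Fin 3 → ℝ) (α : Fin 3) :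
    sigma' w x α = pauliVec (Pi.single α 1 + Pi.single α 1 ⨯₃ w x) := by
  have column : (fun j => Emat w x j α) = Pi.single α 1 + Pi.single α 1 ⨯₃ w x := by
    ext j
    fin_cases α <;> fin_cases j <;> simp [Emat, cross_apply]
  simp only [sigma', ← column, pauliVec, Fintype.linearCombination_apply, coe_smul]

lemma sigma'_eq_pauli (hx : w x = 0) (α : Fin 3) : sigma' w x α = pauli α := by
  rw [sigma'_eq_pauliVec, hx, map_zero, add_zero, pauliVec_single]

lemma Dsigma_eq_pauliVec (hw : DifferentiableAt ℝ w 0) (α β : Fin 3) :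
    Dsigma w α β = pauliVec (Pi.single β 1 ⨯₃ fderiv ℝ w 0 (Pi.single α 1)) := by
  ext k l
  let L : (Fin 3 → ℝ) →L[ℝ] ℂ := LinearMap.toContinuousLinearMap
    (entryLinearMap ℝ ℂ k l ∘ₗ pauliVec ∘ₗ crossProduct (Pi.single β 1))
  have sigma_affine : (fun y => sigma' w y β k l) = fun y => pauli β k l + L (w y) := by
    funext y
    simp [sigma'_eq_pauliVec, pauliVec_single, L]
  have hasFDerivAt_sigma : HasFDerivAt (fun y => sigma' w y β k l) (L ∘L fderiv ℝ w 0) 0 := by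
    rw [sigma_affine]
    exact (L.hasFDerivAt.comp 0 hw.hasFDerivAt).const_add _
  rw [Dsigma, of_apply, pdC, hasFDerivAt_sigma.fderiv]
  rfl

end Frame

section Metric

variable {w : (Fin 3 → ℝ) → Fin 3 → ℝ} {x : Fin 3 → ℝ}

lemma gM_eq_smul_one_sub_vecMulVec (w : (Fin 3 → ℝ) → Fin 3 → ℝ) (x : Fin 3 → ℝ) :
    gM w x = (1 + w x ⬝ᵥ w x) • 1 - vecMulVec (w x) (w x) := by
  ext α β
  fin_cases α <;> fin_cases β <;>
    simp [gM, Emat, Fin.sum_univ_three, vec3_dotProduct, vecMulVec_apply] <;> ring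

lemma smul_one_sub_vecMulVec_mul_one_add_vecMulVec {n R : Type*} [Fintype n] [DecidableEq n]
    [CommRing R] (v : n → R) :
    ((1 + v ⬝ᵥ v) • 1 - vecMulVec v v) * (1 + vecMulVec v v) = (1 + v ⬝ᵥ v) • 1 := by
  simp only [sub_mul, mul_add, mul_one, smul_mul_assoc, one_mul, vecMulVec_mul_vecMulVec,
    vecMulVec_smul]
  module

lemma glM_eq_inv_smul_one_add_vecMulVec (w : (Fin 3 → ℝ) → Fin 3 → ℝ) (x : Fin 3 → ℝ) :
    glM w x = (1 + w x ⬝ᵥ w x)⁻¹ • (1 + vecMulVec (w x) (w x)) := by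
  have denom_ne_zero : 1 + w x ⬝ᵥ w x ≠ 0 := by
    have := dotProduct_self_star_nonneg (w x)
    simp only [star_trivial] at this
    positivity
  refine inv_eq_right_inv ?_
  rw [gM_eq_smul_one_sub_vecMulVec, mul_smul_comm, smul_one_sub_vecMulVec_mul_one_add_vecMulVec,
    inv_smul_smul₀ denom_ne_zero]

lemma glM_eq_one (hx : w x = 0) : glM w x = 1 := by
  simp [glM_eq_inv_smul_one_add_vecMulVec, hx]

lemma sigmaLow_eq_pauli (hx : w x = 0) (β : Fin 3) : sigmaLow w x β = pauli β := by
  simp [sigmaLow, glM_eq_one hx, sigma'_eq_pauli hx, one_apply]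

lemma hasFDerivAt_mul_of_eq_zero {𝕜 E A : Type*} [NontriviallyNormedField 𝕜]
    [NormedAddCommGroup E] [NormedSpace 𝕜 E] [NormedRing A] [NormedAlgebra 𝕜 A]
    {f g : E → A} {x : E} (hf : DifferentiableAt 𝕜 f x) (hg : DifferentiableAt 𝕜 g x)
    (hfx : f x = 0) (hgx : g x = 0) : HasFDerivAt (fun y => f y * g y) (0 : E →L[𝕜] A) x := by
  convert hf.hasFDerivAt.fun_mul' hg.hasFDerivAt using 1
  ext v
  simp [hfx, hgx]

lemma hasFDerivAt_glM_apply (hw : DifferentiableAt ℝ w x) (hx : w x = 0) (α β : Fin 3) :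
    HasFDerivAt (fun y => glM w y α β) (0 : (Fin 3 → ℝ) →L[ℝ] ℝ) x := by
  have hasFDerivAt_mul (i j : Fin 3) :
      HasFDerivAt (fun y => w y i * w y j) (0 : (Fin 3 → ℝ) →L[ℝ] ℝ) x :=
    hasFDerivAt_mul_of_eq_zero (differentiableAt_pi.mp hw i) (differentiableAt_pi.mp hw j)
      (congrFun hx i) (congrFun hx j)
  have hasFDerivAt_denom :
      HasFDerivAt (fun y => 1 + w y ⬝ᵥ w y) (0 : (Fin 3 → ℝ) →L[ℝ] ℝ) x := by
    simpa [dotProduct] using (HasFDerivAt.fun_sum fun i _ => hasFDerivAt_mul i i).const_add 1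
  have hasFDerivAt_inv_denom :
      HasFDerivAt (fun y => (1 + w y ⬝ᵥ w y)⁻¹) (0 : (Fin 3 → ℝ) →L[ℝ] ℝ) x := by
    simpa [Function.comp_def] using
      (hasDerivAt_inv (by simp [hx])).comp_hasFDerivAt x hasFDerivAt_denom
  simpa [glM_eq_inv_smul_one_add_vecMulVec, vecMulVec_apply] using
    hasFDerivAt_inv_denom.fun_mul ((hasFDerivAt_mul α β).const_add ((1 : Matrix _ _ ℝ) α β))

lemma christoffel_eq_zero (hw : DifferentiableAt ℝ w 0) (hw0 : w 0 = 0) (β α γ : Fin 3) :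
    christoffel w β α γ = 0 := by
  simp [christoffel, pdR, (hasFDerivAt_glM_apply hw hw0 _ _).fderiv]

lemma A0_eq_smul_sum_pauli_mul_pauliVec (hw : DifferentiableAt ℝ w 0) (hw0 : w 0 = 0) :
    A0 w = (-(1 / 2) : ℂ) • ∑ α, pauli α * pauliVec (fderiv ℝ w 0 (Pi.single α 1)) := by
  have sum_lower_index (α : Fin 3) :
      ∑ β, pauli α * pauli β * Dsigma w α β =
        (-2 * I) • (pauli α * pauliVec (fderiv ℝ w 0 (Pi.single α 1))) := by
    simp only [Dsigma_eq_pauliVec hw, mul_assoc (pauli α), ← Finset.mul_sum,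
      sum_pauli_mul_pauliVec_single_cross, mul_smul_comm]
  have scalar : -(I / 4) * (-2 * I) = -(1 / 2) := by
    linear_combination (1 / 2 : ℂ) * I_sq
  simp only [A0, christoffel_eq_zero hw hw0, sigma'_eq_pauli hw0, sigmaLow_eq_pauli hw0,
    ofReal_zero, zero_smul, Finset.sum_const_zero, smul_zero, add_zero, sum_lower_index,
    ← Finset.smul_sum, smul_smul, scalar]

end Metric

theorem subprincipal_symbol_eq_neg_half_div_microrotation_general
    (w : (Fin 3 → ℝ) → Fin 3 → ℝ) (hw : DifferentiableAt ℝ w 0) (hw0 : w 0 = 0) :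
    Asub w = (((-(1 / 2) * ∑ α, pdR (fun y => w y α) α : ℝ)) : ℂ)
        • (1 : Matrix (Fin 2) (Fin 2) ℂ) := by
  have div_eq : ∑ α, pdR (fun y => w y α) α = ∑ α, fderiv ℝ w 0 (Pi.single α 1) α := by
    simp only [pdR, fderiv_apply hw, ContinuousLinearMap.comp_apply, ContinuousLinearMap.proj_apply]
  rw [Asub, A0_eq_smul_sum_pauli_mul_pauliVec hw hw0, sum_pauli_mul_pauliVec, div_eq, coe_smul]
  simp only [Dsigma_eq_pauliVec hw]
  module

/-- for the frame given by the linearized orthogonal matrix with microrotation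
vector w, the subprincipal symbol of the massless Dirac operator at the origin equals
−(1/2)(div w)(0)·I. -/
theorem subprincipal_symbol_eq_neg_half_div_microrotation
    (U : Set (Fin 3 → ℝ)) (hU : IsOpen U) (h0 : (0 : Fin 3 → ℝ) ∈ U)
    (w : (Fin 3 → ℝ) → Fin 3 → ℝ)
    (hw : ∀ x ∈ U, DifferentiableAt ℝ w x) (hw0 : w 0 = 0)
    (hinv : ∀ x ∈ U, IsUnit (Emat w x).det) :
    Asub w = (((-(1 / 2) * ∑ α, pdR (fun y => w y α) α : ℝ)) : ℂ)
        • (1 : Matrix (Fin 2) (Fin 2) ℂ) := by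
  exact subprincipal_symbol_eq_neg_half_div_microrotation_general w (hw 0 h0) hw0

end
end

section
/- Let U ⊆ ℝ³ be an open neighbourhood of 0, let w : U → ℝ³ be differentiable with w(0) = 0, and define the frame e_j^α(x) as the entries of the matrix E(x) := [[1, w³(x), −w²(x)], [−w³(x), 1, w¹(x)], [w²(x), −w¹(x), 1]] (the j-th row of E(x) being e_j(x)), assumed pointwise invertible on U. Let the coframe e^k be defined by Σ_α e_j^α e^k_α = δ_j^k, let g^{αβ} := Σ_j e_j^α e_j^β with inverse g_{αβ}, define (curl e^j)_β := (1/2) √(det g_{μν}) Σ_{γ,δ,μ,ν} ε_{γδβ} g^{γμ} g^{δν} (∂e^j_ν/∂x^μ − ∂e^j_μ/∂x^ν), and set *T^α_β := Σ_j e_j^α (curl e^j)_β. Then at the origin: *T^α_β(0) = ∂w^β/∂x^α(0) − δ^α_β (div w)(0), where div w = Σ_γ ∂w^γ/∂x^γ. -/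
open Matrix BigOperators

noncomputable section

/-- The totally antisymmetric symbol ε on three indices, ε₀₁₂ = 1. -/
def eps (i j k : Fin 3) : ℝ :=
  ((((j : ℤ) - (i : ℤ)) * (((k : ℤ) - (j : ℤ))) * (((k : ℤ) - (i : ℤ))) : ℤ) : ℝ) / 2

/-- (curl e^j)_β at the origin, for a coframe f (f x k α = e^k_α(x)). -/
def curlCoframe (w : (Fin 3 → ℝ) → Fin 3 → ℝ) (f : (Fin 3 → ℝ) → Fin 3 → Fin 3 → ℝ)
    (j β : Fin 3) : ℝ :=
  (1 / 2) * Real.sqrt ((gM w 0)⁻¹.det) *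
    ∑ γ, ∑ δ, ∑ μ, ∑ ν, eps γ δ β * gM w 0 γ μ * gM w 0 δ ν *
      (pdR (fun y => f y j ν) μ - pdR (fun y => f y j μ) ν)

/-!
Write `E = 1 + A(w)`, where `A(v)ᵢⱼ = ∑ₖ εᵢⱼₖ vₖ` is skew-symmetric. The matrix of the coframe is
the transposed inverse of `E`; since `E = 1` at the origin, its first derivative there is
`-(dE)ᵀ = -A(dw)ᵀ = A(dw)`, so to first order the coframe coincides with the frame. The metric at
the origin is the identity, hence `(curl eʲ)_β = ∑ ε_{γδβ} ε_{jδk} ∂_γ wᵏ`, and contracting the two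
symbols gives `∂ⱼ w^β - δ_{jβ} div w`.
-/

open scoped Topology

section InverseDerivative

variable {𝕜 V R : Type*} [NontriviallyNormedField 𝕜] [NormedAddCommGroup V] [NormedSpace 𝕜 V]
  [NormedRing R] [HasSummableGeomSeries R] [NormedAlgebra 𝕜 R]
  {a b : V → R} {a' : V →L[𝕜] R} {x : V}

theorem hasFDerivAt_of_eventually_mul_eq_one {u : Rˣ}
    (ha : HasFDerivAt a a' x) (hax : a x = u) (hab : ∀ᶠ y in 𝓝 x, a y * b y = 1) :
    HasFDerivAt b (-(ContinuousLinearMap.mulLeftRight 𝕜 R ↑u⁻¹ ↑u⁻¹).comp a') x := by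
  have hunit : ∀ᶠ y in 𝓝 x, IsUnit (a y) :=
    ha.continuousAt.eventually_mem (hax ▸ Units.nhds u)
  have hb : b =ᶠ[𝓝 x] Ring.inverse ∘ a := by
    filter_upwards [hab, hunit] with y hy hu
    exact hu.mul_left_cancel (hy.trans (Ring.mul_inverse_cancel _ hu).symm)
  have hinv : HasFDerivAt Ring.inverse
      (-ContinuousLinearMap.mulLeftRight 𝕜 R ↑u⁻¹ ↑u⁻¹) (a x) :=
    hax ▸ hasFDerivAt_ringInverse u
  simpa only [ContinuousLinearMap.neg_comp] using (hinv.comp x ha).congr_of_eventuallyEq hb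

theorem hasFDerivAt_neg_of_eventually_mul_eq_one
    (ha : HasFDerivAt a a' x) (hax : a x = 1) (hab : ∀ᶠ y in 𝓝 x, a y * b y = 1) :
    HasFDerivAt b (-a') x := by
  refine (hasFDerivAt_of_eventually_mul_eq_one (u := 1) ha hax hab).congr_fderiv ?_
  ext v
  simp

open scoped Matrix.Norms.Operator in
theorem hasFDerivAt_apply_of_eventually_matrix_mul_eq_one [CompleteSpace 𝕜]
    {n : Type*} [Fintype n] [DecidableEq n]
    {A B : V → Matrix n n 𝕜} {A' : n → n → V →L[𝕜] 𝕜}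
    (hA : ∀ i j, HasFDerivAt (fun y => A y i j) (A' i j) x) (hAx : A x = 1)
    (hAB : ∀ᶠ y in 𝓝 x, A y * B y = 1) (i j : n) :
    HasFDerivAt (fun y => B y i j) (-A' i j) x := by
  -- The uniformity of the operator norm is the entrywise one only up to unfolding, so completeness
  -- has to be supplied by hand.
  have : HasSummableGeomSeries (Matrix n n 𝕜) :=
    @instHasSummableGeomSeriesOfCompleteSpace _ _ (FiniteDimensional.complete 𝕜 _)
  have hA' : HasFDerivAt A (ContinuousLinearMap.pi fun i => ContinuousLinearMap.pi (A' i)) x :=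
    hasFDerivAt_pi.2 fun i => hasFDerivAt_pi.2 fun j => hA i j
  have hB : HasFDerivAt B (-ContinuousLinearMap.pi fun i => ContinuousLinearMap.pi (A' i)) x :=
    hasFDerivAt_neg_of_eventually_mul_eq_one hA' hAx hAB
  exact hasFDerivAt_pi'.1 (hasFDerivAt_pi'.1 hB i) j

end InverseDerivative

theorem eps_swap (i j k : Fin 3) : eps j i k = -eps i j k := by
  simp only [eps]
  push_cast
  ring

theorem sum_eps_mul_eps (i j k l : Fin 3) :
    ∑ m, eps i m j * eps k m l =
      (if i = k then 1 else 0) * (if j = l then 1 else 0) -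
        (if i = l then 1 else 0) * (if k = j then 1 else 0) := by
  simp only [eps, Fin.sum_univ_three]
  fin_cases i <;> fin_cases j <;> fin_cases k <;> fin_cases l <;> norm_num

theorem half_sum_eps_mul_sub_swap (a : Fin 3 → Fin 3 → ℝ) (k : Fin 3) :
    1 / 2 * ∑ i, ∑ j, eps i j k * (a i j - a j i) = ∑ i, ∑ j, eps i j k * a i j := by
  have hswap : ∑ i, ∑ j, eps i j k * a j i = -∑ i, ∑ j, eps i j k * a i j := by
    rw [Finset.sum_comm]
    simp only [← Finset.sum_neg_distrib, ← neg_mul, ← eps_swap]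
  simp only [mul_sub, Finset.sum_sub_distrib, hswap]
  ring

/-- The skew-symmetric matrix `A(v)` with axial vector `v`, in terms of which the frame is
`1 + A(w)`. The sign is such that `A(v) u = u × v`. -/
def axialMatrix (v : Fin 3 → ℝ) : Matrix (Fin 3) (Fin 3) ℝ :=
  Matrix.of fun i j => ∑ k, eps i j k * v k

theorem axialMatrix_apply (v : Fin 3 → ℝ) (i j : Fin 3) :
    axialMatrix v i j = ∑ k, eps i j k * v k := rfl

theorem axialMatrix_zero : axialMatrix 0 = 0 := by
  ext i j
  simp [axialMatrix_apply]

theorem sum_eps_mul_axialMatrix (D : Fin 3 → Fin 3 → ℝ) (i j : Fin 3) :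
    ∑ k, ∑ m, eps k m j * axialMatrix (D k) i m =
      D i j - (if i = j then 1 else 0) * ∑ k, D k k := by
  calc ∑ k, ∑ m, eps k m j * axialMatrix (D k) i m
      = ∑ k, ∑ l, (∑ m, eps k m j * eps i m l) * D k l := by
        refine Finset.sum_congr rfl fun k _ => ?_
        simp only [axialMatrix_apply, Finset.mul_sum, Finset.sum_mul, ← mul_assoc]
        exact Finset.sum_comm
    _ = D i j - (if i = j then 1 else 0) * ∑ k, D k k := by
        simp [sum_eps_mul_eps, sub_mul, Finset.sum_sub_distrib, Finset.mul_sum]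

section Microrotation

variable {w : (Fin 3 → ℝ) → Fin 3 → ℝ} {f : (Fin 3 → ℝ) → Fin 3 → Fin 3 → ℝ}

theorem Emat_eq_one_add_axialMatrix (x : Fin 3 → ℝ) :
    Emat w x = 1 + axialMatrix (w x) := by
  ext i j
  fin_cases i <;> fin_cases j <;>
    norm_num [Emat, axialMatrix_apply, eps, Fin.sum_univ_three]

theorem Emat_zero_eq_one (hw0 : w 0 = 0) : Emat w 0 = 1 := by
  rw [Emat_eq_one_add_axialMatrix, hw0, axialMatrix_zero, add_zero]

theorem gM_eq_transpose_mul_Emat (x : Fin 3 → ℝ) : gM w x = (Emat w x)ᵀ * Emat w x := rfl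

theorem gM_zero_eq_one (hw0 : w 0 = 0) : gM w 0 = 1 := by
  rw [gM_eq_transpose_mul_Emat, Emat_zero_eq_one hw0, transpose_one, one_mul]

theorem pdR_coframe (hw : DifferentiableAt ℝ w 0) (hw0 : w 0 = 0)
    (hf : ∀ᶠ x in 𝓝 0, ∀ j k, ∑ α, Emat w x j α * f x k α = if j = k then 1 else 0)
    (k α μ : Fin 3) :
    pdR (fun y => f y k α) μ = axialMatrix (fun l => pdR (fun y => w y l) μ) k α := by
  have hE : ∀ i j, HasFDerivAt (fun y => Emat w y i j)
      (∑ l, eps i j l • fderiv ℝ (fun y => w y l) 0) 0 := by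
    intro i j
    simp only [Emat_eq_one_add_axialMatrix, Matrix.add_apply, axialMatrix_apply]
    exact (HasFDerivAt.fun_sum fun l _ =>
      (differentiableAt_pi.1 hw l).hasFDerivAt.const_mul (eps i j l)).const_add _
  have hEF : ∀ᶠ x in 𝓝 0, Emat w x * (Matrix.of (f x))ᵀ = 1 := by
    filter_upwards [hf] with x hx
    ext j k
    simpa [mul_apply, one_apply] using hx j k
  have hF := hasFDerivAt_apply_of_eventually_matrix_mul_eq_one hE (Emat_zero_eq_one hw0) hEF α k
  calc pdR (fun y => f y k α) μ
      = -∑ l, eps α k l * pdR (fun y => w y l) μ := by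
        simpa [pdR] using DFunLike.congr_fun hF.fderiv (Pi.single μ 1)
    _ = axialMatrix (fun l => pdR (fun y => w y l) μ) k α := by
        simp only [axialMatrix_apply, eps_swap α k, neg_mul, Finset.sum_neg_distrib]

theorem curlCoframe_eq_sum_eps_mul_pdR (hw0 : w 0 = 0) (j β : Fin 3) :
    curlCoframe w f j β = ∑ γ, ∑ δ, eps γ δ β * pdR (fun y => f y j δ) γ := by
  rw [← half_sum_eps_mul_sub_swap fun γ δ => pdR (fun y => f y j δ) γ]
  simp [curlCoframe, gM_zero_eq_one hw0, one_apply]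

theorem star_torsion_microrotation_formula_general (hw : DifferentiableAt ℝ w 0) (hw0 : w 0 = 0)
    (hf : ∀ᶠ x in 𝓝 0, ∀ j k, ∑ α, Emat w x j α * f x k α = if j = k then 1 else 0)
    (α β : Fin 3) :
    ∑ j, Emat w 0 j α * curlCoframe w f j β =
      pdR (fun y => w y β) α - (if α = β then 1 else 0) * ∑ γ, pdR (fun y => w y γ) γ :=
  calc ∑ j, Emat w 0 j α * curlCoframe w f j β
      = curlCoframe w f α β := by simp [Emat_zero_eq_one hw0, one_apply]
    _ = ∑ γ, ∑ δ, eps γ δ β * axialMatrix (fun l => pdR (fun y => w y l) γ) α δ := by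
        simp only [curlCoframe_eq_sum_eps_mul_pdR hw0, pdR_coframe hw hw0 hf]
    _ = _ := sum_eps_mul_axialMatrix (fun γ l => pdR (fun y => w y l) γ) α β

end Microrotation

/-- the microrotation formula for the Hodge-dualized torsion
*T^α_β(0) = ∂w^β/∂x^α(0) − δ^α_β (div w)(0). -/
theorem star_torsion_microrotation_formula
    (U : Set (Fin 3 → ℝ)) (hU : IsOpen U) (h0 : (0 : Fin 3 → ℝ) ∈ U)
    (w : (Fin 3 → ℝ) → Fin 3 → ℝ)
    (hw : ∀ x ∈ U, DifferentiableAt ℝ w x) (hw0 : w 0 = 0)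
    (hinv : ∀ x ∈ U, IsUnit (Emat w x).det)
    (f : (Fin 3 → ℝ) → Fin 3 → Fin 3 → ℝ)
    (hf : ∀ x ∈ U, ∀ j k, ∑ α, Emat w x j α * f x k α = if j = k then (1 : ℝ) else 0) :
    ∀ α β : Fin 3,
      ∑ j, Emat w 0 j α * curlCoframe w f j β
        = pdR (fun y => w y β) α
          - (if α = β then (1 : ℝ) else 0) * ∑ γ, pdR (fun y => w y γ) γ :=
  star_torsion_microrotation_formula_general (hw 0 h0) hw0
    (Filter.eventually_of_mem (hU.mem_nhds h0) hf)

end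
end
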